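/- Let n ≥ 1, m > n, let p : ℝ^n → [1,∞) be a measurable exponent, and let r ∈ P^log(ℝ^n) be a measurable exponent with r_∞ = r⁻ ≤ p⁻. Define ψ(t) = (1/r⁻)(1 − r⁻/p⁺) for 0 < t ≤ 1 and ψ(t) = (1/r⁺)(1 − r⁻/p⁻) for t > 1 (with the convention 1/p⁺ = 0 if p⁺ = ∞). Then there exists a constant C > 0 such that for every t > 0 and every f ∈ L^{r(·)}(ℝ^n), ‖η_{t,m} * f‖_{L^{p(·)}(ℝ^n)} ≤ C t^{−nψ(t)} ‖f‖_{L^{r(·)}(ℝ^n)}. -/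

import Mathlib

open MeasureTheory Filter Real
open scoped ENNReal

noncomputable section

/-- Euclidean space `ℝⁿ`. -/
abbrev Esp (n : ℕ) := EuclideanSpace ℝ (Fin n)

/-- The variable exponent modular `ρ_{p(·)}(f) = ∫_{ℝⁿ} |f(x)|^{p(x)} dx`. -/
def vMod (n : ℕ) (p : Esp n → ℝ) (f : Esp n → ℝ) : ℝ≥0∞ :=
  ∫⁻ x, (ENNReal.ofReal |f x|) ^ (p x) ∂volume

/-- The Luxemburg norm `‖f‖_{L^{p(·)}} = inf {λ > 0 : ρ_{p(·)}(f/λ) ≤ 1}`. -/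
def luxNorm (n : ℕ) (p : Esp n → ℝ) (f : Esp n → ℝ) : ℝ :=
  sInf {lam : ℝ | 0 < lam ∧ vMod n p (fun x => f x / lam) ≤ 1}

/-- Membership in the variable exponent Lebesgue space `L^{p(·)}(ℝⁿ)`. -/
def MemVLp (n : ℕ) (p : Esp n → ℝ) (f : Esp n → ℝ) : Prop :=
  AEMeasurable f volume ∧ ∃ lam : ℝ, 0 < lam ∧ vMod n p (fun x => f x / lam) ≤ 1

/-- Global log-Hölder continuity of `1/p` with decay value `l` (representing `l = 1/p_∞`). -/
def IsLogHolder (n : ℕ) (p : Esp n → ℝ) (l : ℝ) : Prop :=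
  ∃ c : ℝ, 0 < c ∧
    (∀ x y : Esp n, |1 / p x - 1 / p y| ≤ c / Real.log (Real.exp 1 + 1 / ‖x - y‖)) ∧
    (∀ x : Esp n, |1 / p x - l| ≤ c / Real.log (Real.exp 1 + ‖x‖))

/-- The kernel `η_{t,m}(x) = t^{-n} (1 + |x|/t)^{-m}`. -/
def etaKer (n : ℕ) (t m : ℝ) (x : Esp n) : ℝ :=
  t ^ (-(n : ℝ)) * (1 + ‖x‖ / t) ^ (-m)

/-- Convolution `(u * v)(x) = ∫ u(x - y) v(y) dy`. -/
def convR (n : ℕ) (u v : Esp n → ℝ) (x : Esp n) : ℝ :=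
  ∫ y, u (x - y) * v y ∂volume

/-!
Logarithmic decay embeds the unit ball of `L^{r(·)}` into a ball of `L^q`, `q = r⁻`: with
`1/q = 1/r(x) + 1/s(x)`, Young's inequality gives `(aε)^q ≤ a^{r(x)} + ε^{s(x)}`. Since
`1/s(x) ≤ c / log (e + |x|)`, the choice `ε = e^{-cN}` makes the last term at most `(e + |x|)^{-N}`,
which is integrable for `N > n`. The kernel `η_{t,m}` has mass independent of `t` and supremum
`t^{-n}`, so convolution with it maps `L^q` to `L^q` with norm `O(1)` and to `L^∞` with norm
`O(t^{-n/q})`. If `M` bounds `|g|`, then `|g/λ|^{p(x)} ≤ |g/M|^q (M/λ)^{p(x)}` interpolates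
pointwise between the two. With `M ≈ t^{-n/q}` and `λ ≈ t^{-ns}`, the modular of `g/λ` is at most
`1` as soon as `(t^{-n})^{(1/q - s) p(x)} ≤ t^{-n}`, that is, for `s = 1/q - 1/p⁺` when `t ≤ 1` and
for `s = 1/q - 1/p⁻` when `t > 1`.
-/

section EssentialBounds

variable {α : Type*} [MeasurableSpace α] {μ : Measure α} {f : α → ℝ}

lemma isCoboundedUnder_ge_ae [NeZero μ] (f : α → ℝ) : IsCoboundedUnder (· ≥ ·) (ae μ) f := by
  obtain ⟨k, hk⟩ : ∃ k : ℕ, ∃ᵐ x ∂μ, f x ≤ k := by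
    by_contra! h
    have hlt : ∀ᵐ x ∂μ, ∀ k : ℕ, (k : ℝ) < f x :=
      ae_all_iff.mpr fun k ↦ (h k).mono fun _ hx ↦ hx
    obtain ⟨x, hx⟩ := hlt.exists
    obtain ⟨k, hk⟩ := exists_nat_gt (f x)
    exact (hx k).not_gt hk
  exact .of_frequently_le hk

lemma ae_one_div_essSup_le (hf : ∀ᵐ x ∂μ, 0 < f x) : ∀ᵐ x ∂μ, 1 / essSup f μ ≤ 1 / f x := by
  by_cases hbdd : IsBoundedUnder (· ≤ ·) (ae μ) f
  · filter_upwards [hf, ae_le_essSup hbdd] with x hpos hle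
    exact one_div_le_one_div_of_le hpos hle
  · -- `essSup` of an essentially unbounded real function is `0`, and then so is `1 / essSup`.
    have hzero : essSup f μ = 0 := Real.limsup_of_not_isBoundedUnder hbdd
    filter_upwards [hf] with x hpos
    rw [hzero, div_zero]
    positivity

lemma one_div_essSup_le_one_div_essInf [NeZero μ] (hf : 0 < essInf f μ) :
    1 / essSup f μ ≤ 1 / essInf f μ := by
  have hbdd : IsBoundedUnder (· ≥ ·) (ae μ) f := by
    by_contra h
    exact hf.ne' (Real.liminf_of_not_isBoundedUnder h)
  have hinf : ∀ᵐ x ∂μ, essInf f μ ≤ f x := ae_essInf_le hbdd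
  obtain ⟨x, hsup, hle⟩ :=
    ((ae_one_div_essSup_le (hinf.mono fun _ hx ↦ hf.trans_le hx)).and hinf).exists
  exact hsup.trans (one_div_le_one_div_of_le hf hle)

end EssentialBounds

section Integral

lemma lintegral_mul_rpow_le {α : Type*} [MeasurableSpace α] {μ : Measure α} {k g : α → ℝ≥0∞}
    (hk : AEMeasurable k μ) (hg : AEMeasurable g μ) {q : ℝ} (hq : 1 ≤ q) :
    (∫⁻ x, k x * g x ∂μ) ^ q ≤ (∫⁻ x, k x ∂μ) ^ (q - 1) * ∫⁻ x, k x * g x ^ q ∂μ := by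
  have hq0 : 0 < q := by positivity
  have hconj : 0 ≤ 1 - 1 / q := sub_nonneg.mpr ((div_le_one hq0).mpr hq)
  have hsplit (x : α) : k x * g x = k x ^ (1 - 1 / q) * (k x * g x ^ q) ^ (1 / q) := by
    rw [ENNReal.mul_rpow_of_nonneg _ _ (by positivity), ← mul_assoc,
      ← ENNReal.rpow_add_of_nonneg _ _ hconj (by positivity), ← ENNReal.rpow_mul,
      mul_one_div_cancel hq0.ne', sub_add_cancel, ENNReal.rpow_one, ENNReal.rpow_one]
  have hHolder : ∫⁻ x, k x * g x ∂μ ≤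
      (∫⁻ x, k x ∂μ) ^ (1 - 1 / q) * (∫⁻ x, k x * g x ^ q ∂μ) ^ (1 / q) := by
    rw [lintegral_congr hsplit]
    exact ENNReal.lintegral_mul_norm_pow_le hk (hk.mul (hg.pow_const q)) hconj (by positivity)
      (sub_add_cancel 1 (1 / q))
  calc (∫⁻ x, k x * g x ∂μ) ^ q
      ≤ ((∫⁻ x, k x ∂μ) ^ (1 - 1 / q) * (∫⁻ x, k x * g x ^ q ∂μ) ^ (1 / q)) ^ q := by gcongr
    _ = (∫⁻ x, k x ∂μ) ^ (q - 1) * ∫⁻ x, k x * g x ^ q ∂μ := by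
        rw [ENNReal.mul_rpow_of_nonneg _ _ hq0.le, ← ENNReal.rpow_mul, ← ENNReal.rpow_mul,
          one_div_mul_cancel hq0.ne', ENNReal.rpow_one, sub_mul, one_mul,
          one_div_mul_cancel hq0.ne']

lemma lintegral_comp_smul {E : Type*} [NormedAddCommGroup E] [NormedSpace ℝ E]
    [FiniteDimensional ℝ E] [MeasurableSpace E] [BorelSpace E] (μ : Measure E)
    [μ.IsAddHaarMeasure] (f : E → ℝ≥0∞) {c : ℝ} (hc : c ≠ 0) :
    ∫⁻ x, f (c • x) ∂μ = ENNReal.ofReal |(c ^ Module.finrank ℝ E)⁻¹| * ∫⁻ x, f x ∂μ := by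
  rw [← smul_eq_mul, ← lintegral_smul_measure, ← Measure.map_addHaar_smul μ hc]
  exact ((Homeomorph.smulOfNeZero c hc).measurableEmbedding.lintegral_map f).symm

end Integral

section Embedding

lemma mul_rpow_le_rpow_add_rpow {p q r : ℝ} (h : p.HolderTriple q r) (a b : ℝ≥0∞) :
    (a * b) ^ r ≤ a ^ p + b ^ q := by
  have hr := h.pos'
  have hdiv {u v : ℝ} (huv : v ≤ u) (hv : 0 < v) (x : ℝ≥0∞) :
      x / ENNReal.ofReal (u / v) ≤ x :=
    ENNReal.div_le_of_le_mul <| le_mul_of_one_le_right' <|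
      ENNReal.one_le_ofReal.mpr ((one_le_div hv).mpr huv)
  calc (a * b) ^ r = a ^ r * b ^ r := ENNReal.mul_rpow_of_nonneg _ _ hr.le
    _ ≤ (a ^ r) ^ (p / r) / ENNReal.ofReal (p / r) +
          (b ^ r) ^ (q / r) / ENNReal.ofReal (q / r) :=
        ENNReal.young_inequality _ _ h.holderConjugate_div_div
    _ ≤ (a ^ r) ^ (p / r) + (b ^ r) ^ (q / r) :=
        add_le_add (hdiv h.lt.le hr _) (hdiv h.symm.lt.le hr _)
    _ = a ^ p + b ^ q := by
        rw [← ENNReal.rpow_mul, ← ENNReal.rpow_mul, mul_div_cancel₀ _ hr.ne',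
          mul_div_cancel₀ _ hr.ne']

lemma rpow_le_exp_mul_rpow_add_rpow_neg {q r c N L : ℝ} (hq : 0 < q) (hqr : q ≤ r) (hL : 0 < L)
    (hN : 0 ≤ N) (h : (1 / q - 1 / r) * log L ≤ c) (a : ℝ≥0∞) :
    a ^ q ≤ ENNReal.ofReal (exp (c * N * q)) * (a ^ r + ENNReal.ofReal (L ^ (-N))) := by
  rcases hqr.eq_or_lt with rfl | hlt
  · have hc : 0 ≤ c := by simpa using h
    have hone : 1 ≤ ENNReal.ofReal (exp (c * N * q)) :=
      ENNReal.one_le_ofReal.mpr (one_le_exp (by positivity))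
    exact le_self_add.trans (le_mul_of_one_le_left' hone)
  · have hs : 0 < q⁻¹ - r⁻¹ := sub_pos.mpr (inv_strictAnti₀ hq hlt)
    set s := (q⁻¹ - r⁻¹)⁻¹ with hs_def
    have hqrs : r.HolderTriple s q :=
      ⟨by rw [hs_def, inv_inv, add_sub_cancel], hq.trans hlt, inv_pos.mpr hs⟩
    set ε := ENNReal.ofReal (exp (-(c * N))) with hε
    have hεs : ε ^ s ≤ ENNReal.ofReal (L ^ (-N)) := by
      have hlog : log L ≤ c * s := by
        rw [hs_def, ← div_eq_mul_inv, le_div_iff₀ hs, mul_comm]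
        simpa only [one_div] using h
      rw [hε, ENNReal.ofReal_rpow_of_pos (exp_pos _), ← exp_mul, rpow_def_of_pos hL]
      refine ENNReal.ofReal_le_ofReal (exp_le_exp.mpr ?_)
      nlinarith [mul_le_mul_of_nonneg_right hlog hN]
    have hεq : ENNReal.ofReal (exp (c * N * q)) * ε ^ q = 1 := by
      rw [hε, ENNReal.ofReal_rpow_of_pos (exp_pos _), ← exp_mul,
        ← ENNReal.ofReal_mul (exp_pos _).le, ← exp_add]
      simp
    calc a ^ q = ENNReal.ofReal (exp (c * N * q)) * (a * ε) ^ q := by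
          rw [ENNReal.mul_rpow_of_nonneg _ _ hq.le, mul_left_comm, hεq, mul_one]
      _ ≤ ENNReal.ofReal (exp (c * N * q)) * (a ^ r + ε ^ s) := by
          gcongr
          exact mul_rpow_le_rpow_add_rpow hqrs a ε
      _ ≤ _ := by gcongr

/-- The decay half of log-Hölder continuity: `1/p` approaches the value `l` (representing
`l = 1/p_∞`) at infinity at a logarithmic rate. -/
def HasLogDecay (n : ℕ) (p : Esp n → ℝ) (l : ℝ) : Prop :=
  ∃ c : ℝ, ∀ x : Esp n, |1 / p x - l| ≤ c / log (exp 1 + ‖x‖)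

lemma IsLogHolder.hasLogDecay {n : ℕ} {p : Esp n → ℝ} {l : ℝ} (h : IsLogHolder n p l) :
    HasLogDecay n p l :=
  let ⟨c, _, _, hdecay⟩ := h
  ⟨c, hdecay⟩

lemma vMod_eq_lintegral_enorm {n : ℕ} (p f : Esp n → ℝ) :
    vMod n p f = ∫⁻ x, ‖f x‖ₑ ^ p x := by
  simp only [vMod, Real.enorm_eq_ofReal_abs]

lemma HasLogDecay.exists_lintegral_enorm_rpow_le {n : ℕ} {r : Esp n → ℝ} {q : ℝ}
    (h : HasLogDecay n r (1 / q)) (hq : 0 < q) (hqr : ∀ᵐ x, q ≤ r x) :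
    ∃ K : ℝ≥0∞, K ≠ ∞ ∧ ∀ f : Esp n → ℝ, vMod n r f ≤ 1 → ∫⁻ x, ‖f x‖ₑ ^ q ≤ K := by
  obtain ⟨c, hc⟩ := h
  set N : ℝ := n + 1 with hN
  set W : Esp n → ℝ≥0∞ := fun x ↦ ENNReal.ofReal ((1 + ‖x‖) ^ (-N))
  have hWmeas : Measurable W := by fun_prop
  have hWint : ∫⁻ x, W x < ∞ := finite_integral_one_add_norm (by simp [hN])
  set E := ENNReal.ofReal (exp (c * N * q))
  refine ⟨E * (1 + ∫⁻ x, W x), by finiteness, fun f hf ↦ ?_⟩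
  have hpoint : ∀ᵐ x, ‖f x‖ₑ ^ q ≤ E * (‖f x‖ₑ ^ r x + W x) := by
    filter_upwards [hqr] with x hx
    have hlog : 0 < log (exp 1 + ‖x‖) :=
      log_pos (by linarith [add_one_lt_exp one_ne_zero, norm_nonneg x])
    have hdiff : (1 / q - 1 / r x) * log (exp 1 + ‖x‖) ≤ c := by
      rw [← le_div_iff₀ hlog]
      exact (le_abs_self _).trans (abs_sub_comm (1 / q) _ ▸ hc x)
    have hbase : (exp 1 + ‖x‖) ^ (-N) ≤ (1 + ‖x‖) ^ (-N) := by
      refine rpow_le_rpow_of_nonpos (by positivity) ?_ (by simp only [hN]; linarith)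
      gcongr
      exact one_le_exp zero_le_one
    refine (rpow_le_exp_mul_rpow_add_rpow_neg (N := N) hq hx (by positivity) (by positivity)
      hdiff _).trans ?_
    gcongr
    exact ENNReal.ofReal_le_ofReal hbase
  calc ∫⁻ x, ‖f x‖ₑ ^ q ≤ ∫⁻ x, E * (‖f x‖ₑ ^ r x + W x) := lintegral_mono_ae hpoint
    _ = E * (vMod n r f + ∫⁻ x, W x) := by
        rw [lintegral_const_mul' _ _ ENNReal.ofReal_ne_top, lintegral_add_right _ hWmeas,
          vMod_eq_lintegral_enorm]
    _ ≤ E * (1 + ∫⁻ x, W x) := by gcongr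

end Embedding

section Convolution

variable {n : ℕ} {k f : Esp n → ℝ} {q : ℝ}

lemma convR_div_const (k f : Esp n → ℝ) (c : ℝ) (x : Esp n) :
    convR n k (fun y ↦ f y / c) x = convR n k f x / c := by
  simp only [convR, mul_div_assoc', integral_div]

lemma enorm_convR_rpow_le (hk : Measurable k) (hf : AEMeasurable f) (hq : 1 ≤ q) (x : Esp n) :
    ‖convR n k f x‖ₑ ^ q ≤ (∫⁻ y, ‖k y‖ₑ) ^ (q - 1) * ∫⁻ y, ‖k (x - y)‖ₑ * ‖f y‖ₑ ^ q :=
  calc ‖convR n k f x‖ₑ ^ q ≤ (∫⁻ y, ‖k (x - y)‖ₑ * ‖f y‖ₑ) ^ q := by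
        gcongr
        simpa only [convR, enorm_mul] using
          enorm_integral_le_lintegral_enorm (fun y ↦ k (x - y) * f y)
    _ ≤ (∫⁻ y, ‖k (x - y)‖ₑ) ^ (q - 1) * ∫⁻ y, ‖k (x - y)‖ₑ * ‖f y‖ₑ ^ q :=
        lintegral_mul_rpow_le (by fun_prop) hf.enorm hq
    _ = (∫⁻ y, ‖k y‖ₑ) ^ (q - 1) * ∫⁻ y, ‖k (x - y)‖ₑ * ‖f y‖ₑ ^ q := by
        rw [lintegral_sub_left_eq_self (fun y ↦ ‖k y‖ₑ) x]

lemma enorm_convR_rpow_le_of_enorm_le (hk : Measurable k) (hf : AEMeasurable f) (hq : 1 ≤ q)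
    {b : ℝ≥0∞} (hkb : ∀ x, ‖k x‖ₑ ≤ b) (x : Esp n) :
    ‖convR n k f x‖ₑ ^ q ≤ (∫⁻ y, ‖k y‖ₑ) ^ (q - 1) * (b * ∫⁻ y, ‖f y‖ₑ ^ q) := by
  refine (enorm_convR_rpow_le hk hf hq x).trans ?_
  rw [← lintegral_const_mul'' b (hf.enorm.pow_const q)]
  gcongr
  exact hkb _

lemma lintegral_enorm_convR_rpow_le (hk : Measurable k) (hf : AEMeasurable f) (hq : 1 ≤ q) :
    ∫⁻ x, ‖convR n k f x‖ₑ ^ q ≤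
      (∫⁻ y, ‖k y‖ₑ) ^ (q - 1) * ((∫⁻ y, ‖k y‖ₑ) * ∫⁻ y, ‖f y‖ₑ ^ q) := by
  have hfq : AEMeasurable (fun y ↦ ‖f y‖ₑ ^ q) := hf.enorm.pow_const q
  have hprod : AEMeasurable (Function.uncurry fun x y ↦ ‖k (x - y)‖ₑ * ‖f y‖ₑ ^ q)
      (volume.prod volume) :=
    (hk.comp measurable_sub).enorm.aemeasurable.mul hfq.comp_snd
  calc ∫⁻ x, ‖convR n k f x‖ₑ ^ q
      ≤ ∫⁻ x, (∫⁻ y, ‖k y‖ₑ) ^ (q - 1) * ∫⁻ y, ‖k (x - y)‖ₑ * ‖f y‖ₑ ^ q :=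
        lintegral_mono (enorm_convR_rpow_le hk hf hq)
    _ = (∫⁻ y, ‖k y‖ₑ) ^ (q - 1) * ∫⁻ x, ∫⁻ y, ‖k (x - y)‖ₑ * ‖f y‖ₑ ^ q :=
        lintegral_const_mul'' _ hprod.lintegral_prod_right'
    _ = (∫⁻ y, ‖k y‖ₑ) ^ (q - 1) * ∫⁻ y, ∫⁻ x, ‖k (x - y)‖ₑ * ‖f y‖ₑ ^ q := by
        rw [lintegral_lintegral_swap hprod]
    _ = (∫⁻ y, ‖k y‖ₑ) ^ (q - 1) * ((∫⁻ y, ‖k y‖ₑ) * ∫⁻ y, ‖f y‖ₑ ^ q) := by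
        rw [← lintegral_const_mul'' _ hfq]
        congr! 3 with y
        rw [lintegral_mul_const _ (by fun_prop),
          lintegral_sub_right_eq_self (fun x ↦ ‖k x‖ₑ) y]

end Convolution

section Kernel

variable {n : ℕ} {t m : ℝ}

@[fun_prop]
lemma measurable_etaKer (n : ℕ) (t m : ℝ) : Measurable (etaKer n t m) := by
  unfold etaKer
  fun_prop

lemma etaKer_nonneg (ht : 0 < t) (x : Esp n) : 0 ≤ etaKer n t m x := by
  unfold etaKer
  positivity

lemma etaKer_le_rpow_neg (ht : 0 < t) (hm : 0 ≤ m) (x : Esp n) :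
    etaKer n t m x ≤ t ^ (-(n : ℝ)) := by
  have hbase : 1 ≤ 1 + ‖x‖ / t := le_add_of_nonneg_right (by positivity)
  exact mul_le_of_le_one_right (by positivity)
    (rpow_le_one_of_one_le_of_nonpos hbase (neg_nonpos.mpr hm))

lemma enorm_etaKer_le (ht : 0 < t) (hm : 0 ≤ m) (x : Esp n) :
    ‖etaKer n t m x‖ₑ ≤ ENNReal.ofReal (t ^ (-(n : ℝ))) := by
  rw [Real.enorm_of_nonneg (etaKer_nonneg ht x)]
  exact ENNReal.ofReal_le_ofReal (etaKer_le_rpow_neg ht hm x)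

lemma etaKer_eq_mul_etaKer_one (ht : 0 < t) (x : Esp n) :
    etaKer n t m x = t ^ (-(n : ℝ)) * etaKer n 1 m (t⁻¹ • x) := by
  simp [etaKer, norm_smul, abs_of_pos ht, div_eq_inv_mul]

lemma lintegral_enorm_etaKer (ht : 0 < t) :
    ∫⁻ x, ‖etaKer n t m x‖ₑ = ∫⁻ x, ‖etaKer n 1 m x‖ₑ := by
  simp_rw [etaKer_eq_mul_etaKer_one (n := n) (m := m) ht, enorm_mul]
  rw [lintegral_const_mul' _ _ enorm_ne_top,
    lintegral_comp_smul volume (fun x : Esp n ↦ ‖etaKer n 1 m x‖ₑ) (inv_ne_zero ht.ne'),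
    ← mul_assoc, ← Real.enorm_eq_ofReal_abs, ← enorm_mul]
  simp [rpow_neg ht.le, ht.ne']

lemma lintegral_enorm_etaKer_one_lt_top (hm : (n : ℝ) < m) :
    ∫⁻ x, ‖etaKer n 1 m x‖ₑ < ∞ := by
  simp_rw [Real.enorm_of_nonneg (etaKer_nonneg (n := n) (m := m) one_pos _), etaKer, one_rpow,
    one_mul, div_one]
  exact finite_integral_one_add_norm (by simpa using hm)

lemma enorm_convR_etaKer_rpow_le (ht : 0 < t) (hm : 0 ≤ m) {f : Esp n → ℝ} (hf : AEMeasurable f)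
    {q : ℝ} (hq : 1 ≤ q) (x : Esp n) :
    ‖convR n (etaKer n t m) f x‖ₑ ^ q ≤ (∫⁻ y, ‖etaKer n 1 m y‖ₑ) ^ (q - 1) *
      (ENNReal.ofReal (t ^ (-(n : ℝ))) * ∫⁻ y, ‖f y‖ₑ ^ q) := by
  rw [← lintegral_enorm_etaKer ht]
  exact enorm_convR_rpow_le_of_enorm_le (measurable_etaKer n t m) hf hq (enorm_etaKer_le ht hm) x

lemma lintegral_enorm_convR_etaKer_rpow_le (ht : 0 < t) {f : Esp n → ℝ} (hf : AEMeasurable f)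
    {q : ℝ} (hq : 1 ≤ q) :
    ∫⁻ x, ‖convR n (etaKer n t m) f x‖ₑ ^ q ≤ (∫⁻ y, ‖etaKer n 1 m y‖ₑ) ^ (q - 1) *
      ((∫⁻ y, ‖etaKer n 1 m y‖ₑ) * ∫⁻ y, ‖f y‖ₑ ^ q) := by
  rw [← lintegral_enorm_etaKer ht]
  exact lintegral_enorm_convR_rpow_le (measurable_etaKer n t m) hf hq

lemma exists_convR_etaKer_bounds (hm : (n : ℝ) < m) {r : Esp n → ℝ} {q : ℝ} (hq : 1 ≤ q)
    (hqr : ∀ᵐ x, q ≤ r x) (hr : HasLogDecay n r (1 / q)) :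
    ∃ D : ℝ, 0 < D ∧ ∀ t : ℝ, 0 < t → ∀ f : Esp n → ℝ, AEMeasurable f → vMod n r f ≤ 1 →
      (∀ x, |convR n (etaKer n t m) f x| ^ q ≤ D * t ^ (-(n : ℝ))) ∧
      ∫⁻ x, ‖convR n (etaKer n t m) f x‖ₑ ^ q ≤ ENNReal.ofReal D := by
  obtain ⟨K, hK, hfK⟩ := hr.exists_lintegral_enorm_rpow_le (by positivity) hqr
  set A := ∫⁻ x, ‖etaKer n 1 m x‖ₑ
  have hA : A < ∞ := lintegral_enorm_etaKer_one_lt_top hm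
  have hAq : A ^ (q - 1) ≠ ∞ := ENNReal.rpow_ne_top_of_nonneg (by linarith) hA.ne
  set B := 1 + A ^ (q - 1) * K + A ^ (q - 1) * (A * K) with hB
  have hB_top : B ≠ ∞ := by finiteness
  have hB_pos : 0 < B.toReal := ENNReal.toReal_pos (by simp [hB]) hB_top
  refine ⟨B.toReal, hB_pos, fun t ht f hf hmod ↦ ⟨fun x ↦ ?_, ?_⟩⟩
  · rw [← ENNReal.ofReal_le_ofReal_iff (by positivity), ENNReal.ofReal_mul hB_pos.le,
      ENNReal.ofReal_toReal hB_top, ← ENNReal.ofReal_rpow_of_nonneg (abs_nonneg _) (by positivity),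
      ← Real.enorm_eq_ofReal_abs]
    calc ‖convR n (etaKer n t m) f x‖ₑ ^ q
        ≤ A ^ (q - 1) * (ENNReal.ofReal (t ^ (-(n : ℝ))) * ∫⁻ y, ‖f y‖ₑ ^ q) :=
          enorm_convR_etaKer_rpow_le ht (n.cast_nonneg.trans hm.le) hf hq x
      _ ≤ A ^ (q - 1) * (ENNReal.ofReal (t ^ (-(n : ℝ))) * K) := by gcongr; exact hfK f hmod
      _ = A ^ (q - 1) * K * ENNReal.ofReal (t ^ (-(n : ℝ))) := by ring
      _ ≤ B * ENNReal.ofReal (t ^ (-(n : ℝ))) := by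
          gcongr
          exact le_add_right le_add_self
  · rw [ENNReal.ofReal_toReal hB_top]
    calc ∫⁻ x, ‖convR n (etaKer n t m) f x‖ₑ ^ q
        ≤ A ^ (q - 1) * (A * ∫⁻ y, ‖f y‖ₑ ^ q) :=
          lintegral_enorm_convR_etaKer_rpow_le ht hf hq
      _ ≤ A ^ (q - 1) * (A * K) := by gcongr; exact hfK f hmod
      _ ≤ B := le_add_self

end Kernel

section Luxemburg

variable {n : ℕ} {p r f g : Esp n → ℝ} {q : ℝ}

lemma luxNorm_nonneg (n : ℕ) (p f : Esp n → ℝ) : 0 ≤ luxNorm n p f :=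
  Real.sInf_nonneg fun _ hl ↦ hl.1.le

lemma luxNorm_le_mul_luxNorm {C : ℝ} (hC : 0 < C)
    (hf : ∃ l : ℝ, 0 < l ∧ vMod n r (fun x ↦ f x / l) ≤ 1)
    (h : ∀ l : ℝ, 0 < l → vMod n r (fun x ↦ f x / l) ≤ 1 →
      vMod n p (fun x ↦ g x / (C * l)) ≤ 1) :
    luxNorm n p g ≤ C * luxNorm n r f := by
  rw [← div_le_iff₀' hC]
  refine le_csInf hf fun l ⟨hl, hfl⟩ ↦ ?_
  rw [div_le_iff₀' hC]
  exact csInf_le ⟨0, fun _ hl' ↦ hl'.1.le⟩ ⟨by positivity, h l hl hfl⟩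

lemma vMod_div_le {M l W : ℝ} (hq : 0 ≤ q) (hM : 0 < M) (hl : 0 < l)
    (hqp : ∀ᵐ x, q ≤ p x) (hgM : ∀ x, |g x| ≤ M) (hW : ∀ᵐ x, (M / l) ^ p x ≤ W) :
    vMod n p (fun x ↦ g x / l) ≤ ENNReal.ofReal (W / M ^ q) * ∫⁻ x, ‖g x‖ₑ ^ q := by
  rw [← lintegral_const_mul' _ _ ENNReal.ofReal_ne_top]
  refine lintegral_mono_ae ?_
  filter_upwards [hqp, hW] with x hqx hWx
  have hpow : |g x / l| ^ p x ≤ W / M ^ q * |g x| ^ q :=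
    calc |g x / l| ^ p x = (|g x| / M) ^ p x * (M / l) ^ p x := by
          rw [← mul_rpow (by positivity) (by positivity), div_mul_div_cancel₀ hM.ne', abs_div,
            abs_of_pos hl]
      _ ≤ (|g x| / M) ^ q * W := by
          gcongr ?_ * ?_
          exact rpow_le_rpow_of_exponent_ge' (by positivity) ((div_le_one hM).mpr (hgM x)) hq hqx
      _ = W / M ^ q * |g x| ^ q := by
          rw [div_rpow (abs_nonneg _) hM.le]
          ring
  have hW0 : 0 ≤ W := (by positivity : 0 ≤ (M / l) ^ p x).trans hWx
  rw [Real.enorm_eq_ofReal_abs, ENNReal.ofReal_rpow_of_nonneg (abs_nonneg _) (hq.trans hqx),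
    ENNReal.ofReal_rpow_of_nonneg (abs_nonneg _) hq, ← ENNReal.ofReal_mul (by positivity)]
  exact ENNReal.ofReal_le_ofReal hpow

lemma vMod_div_le_one {D τ s : ℝ} (hq : 0 < q) (hD : 0 < D) (hτ : 0 < τ)
    (hqp : ∀ᵐ x, q ≤ p x) (hsup : ∀ x, |g x| ^ q ≤ D * τ)
    (hint : ∫⁻ x, ‖g x‖ₑ ^ q ≤ ENNReal.ofReal D)
    (hs : ∀ᵐ x, (τ ^ (1 / q - s)) ^ p x ≤ τ) :
    vMod n p (fun x ↦ g x / (D ^ (1 / q) * τ ^ s)) ≤ 1 := by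
  set M := D ^ (1 / q) * τ ^ (1 / q) with hM
  have hMq : M ^ q = D * τ := by
    rw [hM, ← mul_rpow hD.le hτ.le, one_div, rpow_inv_rpow (by positivity) hq.ne']
  have hgM (x : Esp n) : |g x| ≤ M := by
    rw [← rpow_le_rpow_iff (abs_nonneg _) (by positivity) hq, hMq]
    exact hsup x
  have hratio : M / (D ^ (1 / q) * τ ^ s) = τ ^ (1 / q - s) := by
    rw [hM, mul_div_mul_left _ _ (by positivity), rpow_sub hτ]
  calc vMod n p (fun x ↦ g x / (D ^ (1 / q) * τ ^ s))
      ≤ ENNReal.ofReal (τ / M ^ q) * ∫⁻ x, ‖g x‖ₑ ^ q :=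
        vMod_div_le hq.le (by positivity) (by positivity) hqp hgM (by rwa [hratio])
    _ ≤ ENNReal.ofReal D⁻¹ * ENNReal.ofReal D := by
        rw [hMq, div_mul_cancel_right₀ hτ.ne']
        gcongr
    _ = 1 := by
        rw [← ENNReal.ofReal_mul (by positivity), inv_mul_cancel₀ hD.ne', ENNReal.ofReal_one]

end Luxemburg

lemma one_div_mul_one_sub_div {q : ℝ} (hq : q ≠ 0) (b : ℝ) :
    1 / q * (1 - q / b) = 1 / q - 1 / b := by
  field_simp

lemma one_div_mul_one_sub_div_le {q b c : ℝ} (hq : 0 < q) (hqb : q ≤ b) (hc : 1 / c ≤ 1 / q) :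
    1 / c * (1 - q / b) ≤ 1 / q - 1 / b :=
  calc 1 / c * (1 - q / b) ≤ 1 / q * (1 - q / b) := by
        gcongr
        exact sub_nonneg.mpr ((div_le_one (hq.trans_le hqb)).mpr hqb)
    _ = 1 / q - 1 / b := one_div_mul_one_sub_div hq.ne' b

section Main

variable {n : ℕ} {m q : ℝ} {p r : Esp n → ℝ}

lemma exists_luxNorm_convR_etaKer_le (hm : (n : ℝ) < m) (hq : 1 ≤ q) (hqr : ∀ᵐ x, q ≤ r x)
    (hr : HasLogDecay n r (1 / q)) (hqp : ∀ᵐ x, q ≤ p x) :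
    ∃ C : ℝ, 0 < C ∧ ∀ t : ℝ, 0 < t → ∀ s : ℝ,
      (∀ᵐ x, ((t ^ (-(n : ℝ))) ^ (1 / q - s)) ^ p x ≤ t ^ (-(n : ℝ))) →
      ∀ f : Esp n → ℝ, MemVLp n r f →
        luxNorm n p (convR n (etaKer n t m) f) ≤ C * t ^ (-(n : ℝ) * s) * luxNorm n r f := by
  obtain ⟨D, hD, hbounds⟩ := exists_convR_etaKer_bounds hm hq hqr hr
  refine ⟨D ^ (1 / q), by positivity, fun t ht s hs f ⟨hfmeas, hfmod⟩ ↦ ?_⟩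
  refine luxNorm_le_mul_luxNorm (by positivity) hfmod fun l _ hfl ↦ ?_
  obtain ⟨hsup, hint⟩ := hbounds t ht _ (hfmeas.div_const l) hfl
  have hmod := vMod_div_le_one (by positivity) hD (by positivity) hqp hsup hint hs
  simpa only [convR_div_const, div_div, rpow_mul ht.le, mul_comm l] using hmod

lemma exists_luxNorm_convR_etaKer_le_of_one_div_mem_Icc {a b : ℝ} (hm : (n : ℝ) < m) (hq : 1 ≤ q)
    (hqr : ∀ᵐ x, q ≤ r x) (hr : HasLogDecay n r (1 / q)) (hqp : ∀ᵐ x, q ≤ p x)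
    (hp : ∀ᵐ x, 1 / p x ∈ Set.Icc a b) :
    ∃ C : ℝ, 0 < C ∧ ∀ t : ℝ, 0 < t → ∀ f : Esp n → ℝ, MemVLp n r f →
      luxNorm n p (convR n (etaKer n t m) f) ≤
        C * t ^ (-(n : ℝ) * (if t ≤ 1 then 1 / q - a else 1 / q - b)) * luxNorm n r f := by
  obtain ⟨C, hC, h⟩ := exists_luxNorm_convR_etaKer_le hm hq hqr hr hqp
  refine ⟨C, hC, fun t ht f hf ↦ h t ht _ ?_ f hf⟩
  filter_upwards [hqp, hp] with x hqx ⟨hax, hbx⟩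
  have hpx : 0 < p x := by linarith
  rw [← rpow_mul (by positivity)]
  split_ifs with ht1
  · have hτ : 1 ≤ t ^ (-(n : ℝ)) := one_le_rpow_of_pos_of_le_one_of_nonpos ht ht1 (by simp)
    rw [sub_sub_cancel]
    exact rpow_le_self_of_one_le hτ ((le_div_iff₀ hpx).mp hax)
  · have hτ : t ^ (-(n : ℝ)) ≤ 1 := rpow_le_one_of_one_le_of_nonpos (not_le.mp ht1).le (by simp)
    rw [sub_sub_cancel]
    exact rpow_le_self_of_le_one (by positivity) hτ ((div_le_iff₀ hpx).mp hbx)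

theorem statement14_general (hm : (n : ℝ) < m) (hp : ∀ x, 1 ≤ p x) (hr : ∀ x, 1 ≤ r x)
    (hdecay : HasLogDecay n r (1 / essInf r volume)) (hrp : essInf r volume ≤ essInf p volume) :
    ∃ C : ℝ, 0 < C ∧ ∀ t : ℝ, 0 < t → ∀ f : Esp n → ℝ, MemVLp n r f →
      luxNorm n p (convR n (etaKer n t m) f) ≤
        C * t ^ (-(n : ℝ) * (if t ≤ 1 then 1 / essInf r volume - 1 / essSup p volume
          else 1 / essInf r volume - 1 / essInf p volume)) * luxNorm n r f := by
  have hr_inf : 1 ≤ essInf r volume :=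
    le_essInf_of_ae_le 1 (.of_forall hr) (isCoboundedUnder_ge_ae r)
  have hr_ge : ∀ᵐ x, essInf r volume ≤ r x := ae_essInf_le (isBoundedUnder_of ⟨1, hr⟩)
  have hp_ge : ∀ᵐ x, essInf p volume ≤ p x := ae_essInf_le (isBoundedUnder_of ⟨1, hp⟩)
  have hp_sup := ae_one_div_essSup_le (μ := volume) (.of_forall fun x ↦ one_pos.trans_le (hp x))
  refine exists_luxNorm_convR_etaKer_le_of_one_div_mem_Icc hm hr_inf hr_ge hdecay
    (hp_ge.mono fun x hx ↦ hrp.trans hx) ?_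
  filter_upwards [hp_ge, hp_sup] with x hpx hsup
  exact ⟨hsup, one_div_le_one_div_of_le (by linarith) hpx⟩

end Main

/-- Theorem 3.17(2) of the paper: for a measurable exponent `p` and `r ∈ P^log` with
`r_∞ = r⁻ ≤ p⁻`, `‖η_{t,m} * f‖_{L^{p(·)}} ≤ C t^{-nψ(t)} ‖f‖_{L^{r(·)}}`, where
`ψ(t) = (1/r⁻)(1 - r⁻/p⁺)` for `0 < t ≤ 1` and `ψ(t) = (1/r⁺)(1 - r⁻/p⁻)` for `t > 1`
(conventions `1/p⁺ = 0` if `p⁺ = ∞` etc. match Lean's `essSup = 0` for essentially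
unbounded real-valued exponents together with `x/0 = 0`). -/
theorem statement14 (n : ℕ) (hn : 1 ≤ n) (m : ℝ) (hm : (n : ℝ) < m)
    (pexp : Esp n → ℝ) (hpmeas : Measurable pexp) (hp1 : ∀ x, 1 ≤ pexp x)
    (r : Esp n → ℝ) (hrmeas : Measurable r) (hr1 : ∀ x, 1 ≤ r x)
    (pm pp rm rp : ℝ)
    (hpm : pm = essInf pexp volume) (hpp : pp = essSup pexp volume)
    (hrm : rm = essInf r volume) (hrp : rp = essSup r volume)
    (hrlog : IsLogHolder n r (1 / rm))
    (hrmpm : rm ≤ pm) :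
    ∃ C : ℝ, 0 < C ∧ ∀ t : ℝ, 0 < t → ∀ f : Esp n → ℝ,
      MemVLp n r f →
      luxNorm n pexp (convR n (etaKer n t m) f) ≤
        C * t ^ (-(n : ℝ) *
          (if t ≤ 1 then (1 / rm) * (1 - rm / pp) else (1 / rp) * (1 - rm / pm))) *
        luxNorm n r f := by
  subst hpm hpp hrm hrp
  have hr_inf : 1 ≤ essInf r volume :=
    le_essInf_of_ae_le 1 (.of_forall hr1) (isCoboundedUnder_ge_ae r)
  obtain ⟨C, hC, hbound⟩ := statement14_general hm hp1 hr1 hrlog.hasLogDecay hrmpm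
  refine ⟨C, hC, fun t ht f hf ↦ (hbound t ht f hf).trans ?_⟩
  refine mul_le_mul_of_nonneg_right (mul_le_mul_of_nonneg_left ?_ hC.le) (luxNorm_nonneg n r f)
  split_ifs with ht1
  · rw [one_div_mul_one_sub_div (by positivity)]
  · refine rpow_le_rpow_of_exponent_le (not_le.mp ht1).le
      (mul_le_mul_of_nonpos_left ?_ (neg_nonpos.mpr n.cast_nonneg))
    exact one_div_mul_one_sub_div_le (by positivity) hrmpm
      (one_div_essSup_le_one_div_essInf (by positivity))
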